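/- arXiv:1608.02014 — 2 statements merged into one kernel-verified Lean document; each statement's English description precedes it below -/
import Mathlib

section
/- Let X_0, X_1, ... be a stationary Markov chain on a countable state space S with transition matrix P, stationary distribution π, X_0 ~ π, and label function ω : S → ℝ. For j, ℓ, k ∈ ℕ with j ≤ k, let ρ_{j,ℓ}^k(σ) denote the conditional probability, given X_j = σ, that X_j is ℓ-small among X_0, ..., X_k (defined whenever π(σ) > 0). Then for every such σ and every j ≤ k, ρ_{j,2ℓ}^k(σ) ≥ ρ_{j,ℓ}^j(σ) · ρ_{0,ℓ}^{k−j}(σ). -/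
open MeasureTheory Finset
open scoped ENNReal

/-- `X j` is `ℓ`-small among `X 0, ..., X k` (at the sample point `a`): there are at most `ℓ`
indices `i ≠ j` in `{0, ..., k}` with `ω (X i a) ≤ ω (X j a)`. -/
def IsSmallAt {Ω S : Type*} (X : ℕ → Ω → S) (ω : S → ℝ) (j ℓ k : ℕ) (a : Ω) : Prop :=
  ((Finset.range (k + 1)).filter (fun i => i ≠ j ∧ ω (X i a) ≤ ω (X j a))).card ≤ ℓ

/-- `ρ_{j,ℓ}^k(σ)`: the conditional probability, given `X j = σ`, that `X j` is `ℓ`-small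
among `X 0, ..., X k`. -/
noncomputable def rho {Ω S : Type*} [MeasurableSpace Ω] (μ : Measure Ω)
    (X : ℕ → Ω → S) (ω : S → ℝ) (j ℓ k : ℕ) (σ : S) : ℝ≥0∞ :=
  μ {a | X j a = σ ∧ IsSmallAt X ω j ℓ k a} / μ {a | X j a = σ}

/-!
Cut the path at time `j`. Given `X j = σ`, the past `X 0, ..., X j` and the future
`X j, X (j + 1), ...` are independent, and the future is distributed as the chain started at `σ`.
If `X j` is `ℓ`-small in the past and `ℓ'`-small in the future, then it is `(ℓ + ℓ')`-small in the
whole path, and the probability of the first event is the product of the two conditional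
probabilities.

Measurability of the chain comes from the finite-dimensional distributions alone: the outer measures
of the countably many path cylinders of a given length sum to `1`, so none of the cylinders can
overlap another one's measurable hull in positive measure, and each is null-measurable.
-/

section Measurability

variable {Ω T : Type*} [MeasurableSpace Ω] {μ : Measure Ω}

lemma nullMeasurableSet_of_measure_add_measure_compl_le [IsFiniteMeasure μ] {A : Set Ω}
    (h : μ A + μ Aᶜ ≤ μ Set.univ) : NullMeasurableSet A μ := by
  -- The complement of a measurable hull of `Aᶜ` approximates `A` from inside, with full measure.
  have hmeas : MeasurableSet (toMeasurable μ Aᶜ)ᶜ := (measurableSet_toMeasurable μ Aᶜ).compl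
  have hsub : (toMeasurable μ Aᶜ)ᶜ ⊆ A := Set.compl_subset_comm.1 (subset_toMeasurable μ Aᶜ)
  have hle : μ A ≤ μ (toMeasurable μ Aᶜ)ᶜ := by
    rw [measure_compl (measurableSet_toMeasurable μ Aᶜ) (measure_ne_top _ _),
      measure_toMeasurable]
    exact ENNReal.le_sub_of_add_le_right (measure_ne_top _ _) h
  exact hmeas.nullMeasurableSet.congr
    (ae_eq_of_subset_of_measure_ge hsub hle hmeas.nullMeasurableSet (measure_ne_top _ _))

variable [Countable T] [MeasurableSpace T] [DiscreteMeasurableSpace T]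

lemma aemeasurable_of_tsum_measure_fiber_le [IsFiniteMeasure μ] {f : Ω → T}
    (h : ∑' t, μ (f ⁻¹' {t}) ≤ μ Set.univ) : AEMeasurable f μ := by
  classical
  have hfiber (t : T) : NullMeasurableSet (f ⁻¹' {t}) μ := by
    refine nullMeasurableSet_of_measure_add_measure_compl_le (le_trans ?_ h)
    rw [ENNReal.tsum_eq_add_tsum_ite t]
    gcongr
    have hcover : (f ⁻¹' {t})ᶜ ⊆ ⋃ s, if s = t then ∅ else f ⁻¹' {s} := fun a ha =>
      Set.mem_iUnion.2 ⟨f a, by simpa using ha⟩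
    refine (measure_mono hcover).trans ((measure_iUnion_le _).trans_eq (tsum_congr fun s => ?_))
    split_ifs <;> simp
  exact NullMeasurable.aemeasurable (measurable_to_countable' hfiber)

lemma tsum_measure_inter_fiber {f : Ω → T} (hf : AEMeasurable f μ) (E : Set Ω) :
    ∑' t, μ (f ⁻¹' {t} ∩ E) = μ E := by
  have hfE : AEMeasurable f (μ.restrict E) := hf.restrict
  calc ∑' t, μ (f ⁻¹' {t} ∩ E)
      = ∑' t, (Set.univ : Set T).indicator (fun t => (μ.restrict E).map f {t}) t :=
        tsum_congr fun t => by
          rw [Set.indicator_univ, Measure.map_apply_of_aemeasurable hfE (.of_discrete),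
            Measure.restrict_apply₀ (hfE.nullMeasurable .of_discrete)]
    _ = μ E := by
        rw [Measure.tsum_indicator_apply_singleton _ _ .univ,
          Measure.map_apply_of_aemeasurable hfE .univ, Set.preimage_univ,
          Measure.restrict_apply_univ]

lemma measure_preimage_inter_preimage_mul_of_fibers {T' : Type*} [Countable T'] [MeasurableSpace T']
    [DiscreteMeasurableSpace T'] [SFinite μ] {U : Ω → T} {V W : Ω → T'} (hU : AEMeasurable U μ)
    (hV : AEMeasurable V μ) (hW : AEMeasurable W μ) {A : Set T} {B : Set T'} {c : ℝ≥0∞}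
    (h : ∀ u ∈ A, ∀ v ∈ B,
      μ (U ⁻¹' {u} ∩ V ⁻¹' {v}) * c = μ (U ⁻¹' {u}) * μ (W ⁻¹' {v})) :
    μ (U ⁻¹' A ∩ V ⁻¹' B) * c = μ (U ⁻¹' A) * μ (W ⁻¹' B) := by
  have hjoint (A : Set T) (B : Set T') :
      μ.map (fun a => (U a, V a)) (A ×ˢ B) = μ (U ⁻¹' A ∩ V ⁻¹' B) := by
    rw [Measure.map_apply_of_aemeasurable (hU.prodMk hV) .of_discrete, Set.mk_preimage_prod]
  have hprod (A : Set T) (B : Set T') :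
      (μ.map U).prod (μ.map W) (A ×ˢ B) = μ (U ⁻¹' A) * μ (W ⁻¹' B) := by
    rw [Measure.prod_prod, Measure.map_apply_of_aemeasurable hU .of_discrete,
      Measure.map_apply_of_aemeasurable hW .of_discrete]
  rw [← hjoint, ← hprod, ← Measure.tsum_indicator_apply_singleton _ _ .of_discrete,
    ← Measure.tsum_indicator_apply_singleton _ _ .of_discrete, ← ENNReal.tsum_mul_right]
  refine tsum_congr fun ⟨u, v⟩ => ?_
  by_cases huv : (u, v) ∈ A ×ˢ B
  · rw [Set.indicator_of_mem huv, Set.indicator_of_mem huv, ← Set.singleton_prod_singleton,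
      hjoint, hprod, h u huv.1 v huv.2]
  · rw [Set.indicator_of_notMem huv, Set.indicator_of_notMem huv, zero_mul]

end Measurability

/-- `X` is a Markov chain with initial distribution `π` and transition matrix `P`, as expressed by
its finite-dimensional distributions. The `X n` are not assumed measurable, so `μ` is a priori only
an outer measure on the cylinders. -/
structure IsMarkovChain {Ω S : Type*} [MeasurableSpace Ω] (μ : Measure Ω) (X : ℕ → Ω → S)
    (π : S → ℝ≥0∞) (P : S → S → ℝ≥0∞) : Prop where
  tsum_initial : ∑' s, π s = 1
  tsum_transition : ∀ s, ∑' t, P s t = 1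
  measure_cylinder : ∀ (n : ℕ) (s : ℕ → S),
    μ {a | ∀ i ≤ n, X i a = s i} = π (s 0) * ∏ i ∈ Finset.range n, P (s i) (s (i + 1))

/-- The finite path formed by the terms `x 0, ..., x n` of a trajectory `x`. For a countable state
space there are only countably many such paths, so events up to time `n` are sums over them. -/
def initialPath {S : Type*} (n : ℕ) (x : ℕ → S) : Fin (n + 1) → S := fun i => x i

lemma initialPath_eq_iff {S : Type*} {n : ℕ} {x y : ℕ → S} :
    initialPath n x = initialPath n y ↔ ∀ i ≤ n, x i = y i := by
  simp only [initialPath, funext_iff, Fin.forall_iff, Nat.lt_succ_iff]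

lemma initialPath_surjective {S : Type*} (n : ℕ) :
    Function.Surjective (initialPath n : (ℕ → S) → Fin (n + 1) → S) := fun u =>
  ⟨fun i => u (Fin.ofNat (n + 1) i), by ext i; simp [initialPath]⟩

lemma preimage_initialPath_image {Ω S : Type*} {n : ℕ} {A : (ℕ → S) → Prop}
    (hA : DependsOn A (Set.Iic n)) (Y : Ω → ℕ → S) :
    (fun a => initialPath n (Y a)) ⁻¹' (initialPath n '' {x | A x}) = {a | A (Y a)} := by
  refine Set.Subset.antisymm ?_ fun a ha => ⟨Y a, ha, rfl⟩
  rintro a ⟨x, hx, hxY⟩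
  exact (hA (initialPath_eq_iff.1 hxY)).mp hx

lemma tsum_path_weight {S : Type*} (π : S → ℝ≥0∞) {P : S → S → ℝ≥0∞}
    (hP : ∀ s, ∑' t, P s t = 1) (n : ℕ) :
    ∑' u : Fin (n + 1) → S, π (u 0) * ∏ i : Fin n, P (u i.castSucc) (u i.succ) = ∑' s, π s := by
  induction n with
  | zero =>
    rw [← (Equiv.funUnique (Fin 1) S).symm.tsum_eq]
    simp
  | succ n ih =>
    rw [← (Fin.snocEquiv fun _ => S).tsum_eq, ENNReal.tsum_prod', ENNReal.tsum_comm, ← ih]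
    refine tsum_congr fun u => ?_
    simp only [Fin.snocEquiv_apply, Fin.prod_univ_castSucc, Fin.snoc_castSucc, ← Fin.castSucc_zero,
      Fin.succ_castSucc, Fin.succ_last, Fin.snoc_last]
    rw [← mul_one (π (u 0) * _), ← hP (u (Fin.last n)), ← ENNReal.tsum_mul_left]
    simp only [mul_assoc]

namespace IsMarkovChain

variable {Ω S : Type*} [MeasurableSpace Ω] {μ : Measure Ω} {X : ℕ → Ω → S} {π : S → ℝ≥0∞}
  {P : S → S → ℝ≥0∞}

lemma measure_initial_eq (h : IsMarkovChain μ X π P) (s : S) : μ {a | X 0 a = s} = π s := by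
  simpa using h.measure_cylinder 0 fun _ => s

lemma initial_ne_top (h : IsMarkovChain μ X π P) (s : S) : π s ≠ ∞ :=
  ne_top_of_le_ne_top ENNReal.one_ne_top (h.tsum_initial ▸ ENNReal.le_tsum s)

lemma measure_initialPath_eq (h : IsMarkovChain μ X π P) {n : ℕ} (u : Fin (n + 1) → S) :
    μ {a | initialPath n (fun i => X i a) = u} =
      π (u 0) * ∏ i : Fin n, P (u i.castSucc) (u i.succ) := by
  obtain ⟨s, rfl⟩ := initialPath_surjective n u
  simp only [initialPath_eq_iff, h.measure_cylinder, Finset.prod_range]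
  rfl

lemma measure_cylinder_concat (h : IsMarkovChain μ X π P) {j : ℕ} (m : ℕ) {s t : ℕ → S}
    (hst : s j = t 0) :
    μ {a | (∀ i ≤ j, X i a = s i) ∧ ∀ i ≤ m, X (j + i) a = t i} * π (s j) =
      μ {a | ∀ i ≤ j, X i a = s i} * μ {a | ∀ i ≤ m, X i a = t i} := by
  obtain ⟨r, hrs, hrt⟩ : ∃ r : ℕ → S, (∀ i ≤ j, r i = s i) ∧ ∀ i, r (j + i) = t i := by
    refine ⟨fun i => if i ≤ j then s i else t (i - j), fun i hi => if_pos hi, fun i => ?_⟩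
    rcases i.eq_zero_or_pos with rfl | hi
    · simpa using hst
    · simp [hi.ne']
  have hcyl : {a | (∀ i ≤ j, X i a = s i) ∧ ∀ i ≤ m, X (j + i) a = t i} =
      {a | ∀ i ≤ j + m, X i a = r i} := by
    ext a
    refine ⟨fun ⟨hs, ht⟩ i hi => ?_, fun hr => ⟨fun i hi => ?_, fun i hi => ?_⟩⟩
    · rcases le_total i j with hij | hij
      · rw [hs i hij, hrs i hij]
      · obtain ⟨i, rfl⟩ := Nat.exists_eq_add_of_le hij
        rw [ht i (by lia), hrt]
    · rw [hr i (by lia), hrs i hi]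
    · rw [hr (j + i) (by lia), hrt]
  have hpast : {a | ∀ i ≤ j, X i a = s i} = {a | ∀ i ≤ j, X i a = r i} := by
    ext a
    exact forall₂_congr fun i hi => by rw [hrs i hi]
  rw [hcyl, hpast, ← hrs j le_rfl]
  simp only [← hrt, h.measure_cylinder, Finset.prod_range_add, add_zero, ← add_assoc]
  ring

variable [Countable S] [IsProbabilityMeasure μ]

section

variable [MeasurableSpace S] [DiscreteMeasurableSpace S]

lemma aemeasurable_initialPath (h : IsMarkovChain μ X π P) (n : ℕ) :
    AEMeasurable (fun a => initialPath n (fun i => X i a)) μ := by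
  refine aemeasurable_of_tsum_measure_fiber_le (le_of_eq ?_)
  rw [measure_univ, ← h.tsum_initial, ← tsum_path_weight π h.tsum_transition n]
  exact tsum_congr h.measure_initialPath_eq

lemma aemeasurable (h : IsMarkovChain μ X π P) (n : ℕ) : AEMeasurable (X n) μ :=
  (measurable_pi_apply (Fin.last n)).comp_aemeasurable (h.aemeasurable_initialPath n)

end

lemma markov_property (h : IsMarkovChain μ X π P) {j m : ℕ} {A B : (ℕ → S) → Prop}
    (hA : DependsOn A (Set.Iic j)) (hB : DependsOn B (Set.Iic m)) (σ : S) :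
    μ {a | (X j a = σ ∧ A fun i => X i a) ∧ X j a = σ ∧ B fun i => X (j + i) a} * π σ =
      μ {a | X j a = σ ∧ A fun i => X i a} * μ {a | X 0 a = σ ∧ B fun i => X i a} := by
  let _ : MeasurableSpace S := ⊤
  have : DiscreteMeasurableSpace S := ⟨fun _ => trivial⟩
  have hpast : DependsOn (fun x : ℕ → S => x j = σ ∧ A x) (Set.Iic j) := fun x y hxy => by
    simp only [hxy j Set.self_mem_Iic, hA hxy]
  have hfuture : DependsOn (fun x : ℕ → S => x 0 = σ ∧ B x) (Set.Iic m) := fun x y hxy => by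
    simp only [hxy 0 (Nat.zero_le m), hB hxy]
  have hshift : AEMeasurable (fun a => initialPath m fun i => X (j + i) a) μ :=
    aemeasurable_pi_lambda _ fun i => h.aemeasurable (j + i)
  have hmul := measure_preimage_inter_preimage_mul_of_fibers (h.aemeasurable_initialPath j) hshift
    (h.aemeasurable_initialPath m) (A := initialPath j '' {x | x j = σ ∧ A x})
    (B := initialPath m '' {x | x 0 = σ ∧ B x}) (c := π σ) ?_
  · rwa [preimage_initialPath_image hpast, preimage_initialPath_image hfuture,
      preimage_initialPath_image hfuture] at hmul
  · rintro _ ⟨s, ⟨hs, -⟩, rfl⟩ _ ⟨t, ⟨ht, -⟩, rfl⟩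
    have hconcat := h.measure_cylinder_concat m (hs.trans ht.symm)
    rw [hs, Set.ofPred_and] at hconcat
    simpa only [Set.preimage, Set.mem_singleton_iff, initialPath_eq_iff] using hconcat

lemma shift (h : IsMarkovChain μ X π P) (hstat : ∀ t, ∑' s, π s * P s t = π t) :
    IsMarkovChain μ (fun n => X (n + 1)) π P where
  tsum_initial := h.tsum_initial
  tsum_transition := h.tsum_transition
  measure_cylinder n s := by
    let _ : MeasurableSpace S := ⊤
    have : DiscreteMeasurableSpace S := ⟨fun _ => trivial⟩
    rw [← tsum_measure_inter_fiber (h.aemeasurable 0), ← hstat (s 0), ← ENNReal.tsum_mul_right]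
    refine tsum_congr fun t => ?_
    calc μ (X 0 ⁻¹' {t} ∩ {a | ∀ i ≤ n, X (i + 1) a = s i})
        = μ {a | ∀ i ≤ n + 1, X i a = i.casesOn t s} := by
          congr 1
          ext a
          simp only [← Nat.lt_succ_iff, Set.mem_ofPred_eq, Set.mem_inter_iff, Set.mem_preimage,
            Set.mem_singleton_iff, Nat.forall_lt_succ_left (n := n + 1)]
          rfl
      _ = π t * P t (s 0) * ∏ i ∈ Finset.range n, P (s i) (s (i + 1)) := by
          rw [h.measure_cylinder, Finset.prod_range_succ', mul_comm (∏ _ ∈ _, _), ← mul_assoc]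
          rfl

lemma measure_eq_of_stationary (h : IsMarkovChain μ X π P)
    (hstat : ∀ t, ∑' s, π s * P s t = π t) (n : ℕ) (s : S) : μ {a | X n a = s} = π s := by
  induction n generalizing X with
  | zero => exact h.measure_initial_eq s
  | succ _ ih => exact ih (h.shift hstat)

end IsMarkovChain

lemma dependsOn_isSmallAt {S : Type*} (ω : S → ℝ) {j k : ℕ} (hjk : j ≤ k) (ℓ : ℕ) :
    DependsOn (IsSmallAt (fun i (x : ℕ → S) => x i) ω j ℓ k) (Set.Iic k) := by
  intro x y hxy
  simp only [IsSmallAt]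
  rw [Finset.filter_congr fun i hi => by
    rw [hxy i (Nat.lt_succ_iff.1 (Finset.mem_range.1 hi)), hxy j hjk]]

lemma IsSmallAt.concat {Ω S : Type*} {X : ℕ → Ω → S} {ω : S → ℝ} {j m ℓ ℓ' : ℕ} {a : Ω}
    (hpast : IsSmallAt X ω j ℓ j a) (hfuture : IsSmallAt (fun i => X (j + i)) ω 0 ℓ' m a) :
    IsSmallAt X ω j (ℓ + ℓ') (j + m) a := by
  rw [IsSmallAt, Finset.card_filter] at *
  rw [Finset.sum_range_succ'] at hfuture
  rw [add_right_comm, Finset.sum_range_add]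
  refine add_le_add hpast (le_trans ?_ hfuture)
  simp [add_assoc, add_comm 1]

theorem rho_split_general {Ω S : Type*} [MeasurableSpace Ω] [Countable S] {μ : Measure Ω}
    [IsProbabilityMeasure μ] {X : ℕ → Ω → S} {π : S → ℝ≥0∞} {P : S → S → ℝ≥0∞}
    (h : IsMarkovChain μ X π P) (ω : S → ℝ) {j k : ℕ} (hjk : j ≤ k) (ℓ ℓ' : ℕ) {σ : S}
    (hσ : π σ ≠ 0) (hjσ : μ {a | X j a = σ} ≠ 0) :
    rho μ X ω j ℓ j σ * rho μ X ω 0 ℓ' (k - j) σ ≤ rho μ X ω j (ℓ + ℓ') k σ := by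
  obtain ⟨m, rfl⟩ := Nat.exists_eq_add_of_le hjk
  have hmarkov :
      μ {a | (X j a = σ ∧ IsSmallAt X ω j ℓ j a) ∧
          X j a = σ ∧ IsSmallAt (fun i => X (j + i)) ω 0 ℓ' m a} * π σ =
        μ {a | X j a = σ ∧ IsSmallAt X ω j ℓ j a} * μ {a | X 0 a = σ ∧ IsSmallAt X ω 0 ℓ' m a} :=
    h.markov_property (dependsOn_isSmallAt ω le_rfl ℓ) (dependsOn_isSmallAt ω m.zero_le ℓ') σ
  rw [Nat.add_sub_cancel_left, rho, rho, rho, h.measure_initial_eq,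
    ← ENNReal.mul_div_mul_comm (.inl hjσ) (.inr hσ), ← hmarkov,
    ENNReal.mul_div_mul_right _ _ hσ (h.initial_ne_top σ)]
  refine ENNReal.div_le_div_right (measure_mono ?_) _
  rintro a ⟨⟨hj, hpast⟩, -, hfuture⟩
  exact ⟨hj, hpast.concat hfuture⟩

/-- Let `X 0, X 1, ...` be a stationary Markov chain on a countable state
space `S` with transition matrix `P`, stationary distribution `π`, `X 0 ~ π`, and label
function `ω : S → ℝ`.  Then for `j ≤ k`, `ℓ : ℕ` and `σ` with `π σ > 0`,
`ρ_{j,2ℓ}^k(σ) ≥ ρ_{j,ℓ}^j(σ) · ρ_{0,ℓ}^{k−j}(σ)`. -/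
theorem rho_split
    {Ω S : Type*} [MeasurableSpace Ω] [Countable S]
    (μ : Measure Ω) [IsProbabilityMeasure μ]
    (X : ℕ → Ω → S) (π : S → ℝ≥0∞) (P : S → S → ℝ≥0∞) (ω : S → ℝ)
    (hπ : ∑' s, π s = 1)
    (hProw : ∀ s, ∑' t, P s t = 1)
    -- the chain is the Markov chain with initial distribution `π` and transition matrix `P`
    (hjoint : ∀ (n : ℕ) (s : ℕ → S),
      μ {a | ∀ i ≤ n, X i a = s i} = π (s 0) * ∏ i ∈ Finset.range n, P (s i) (s (i + 1)))
    -- `π` is stationary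
    (hstat : ∀ t, ∑' s, π s * P s t = π t)
    (j ℓ k : ℕ) (hjk : j ≤ k) (σ : S) (hσ : 0 < π σ) :
    rho μ X ω j ℓ j σ * rho μ X ω 0 ℓ (k - j) σ ≤ rho μ X ω j (2 * ℓ) k σ := by
  have h : IsMarkovChain μ X π P := ⟨hπ, hProw, hjoint⟩
  rw [two_mul]
  exact rho_split_general h ω hjk ℓ ℓ hσ.ne' (h.measure_eq_of_stationary hstat j σ ▸ hσ.ne')
end

section
/- Let X_0, X_1, ... be a stationary reversible Markov chain on a countable state space S with reversible stationary distribution π, X_0 ~ π, and label function ω : S → ℝ. For j, ℓ, k ∈ ℕ with j ≤ k, let ρ_{j,ℓ}^k denote the (unconditional) probability that X_j is ℓ-small among X_0, ..., X_k. Then for every j ≤ k and every ℓ, ρ_{j,2ℓ}^k ≥ (ρ_{0,ℓ}^k)^2. -/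
open MeasureTheory Finset
open scoped ENNReal

/-!
Conditionally on `X j = s`, the reversed past and the future of a reversible chain are independent,
and both are distributed as paths of the chain started at `s`. Let `f n s` be the probability that
at most `ℓ` of the first `n` steps from `s` land on a label `≤ ω s`. Then `X 0` is `ℓ`-small with
probability `∑ π f k`, while `X j` is `2ℓ`-small as soon as its past and its future each contain at
most `ℓ` such labels, which has probability `∑ π (f j) (f (k - j))`. As `f` decreases in `n`, the
latter is at least `∑ π (f k)²`, and Jensen's inequality concludes.
-/

section Preliminaries

variable {ι : Type*}

theorem rpow_tsum_mul_le_tsum_mul_rpow {p : ℝ} (hp : 1 ≤ p) {w : ι → ℝ≥0∞}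
    (hw : ∑' i, w i ≤ 1) (f : ι → ℝ≥0∞) :
    (∑' i, w i * f i) ^ p ≤ ∑' i, w i * f i ^ p := by
  have hp₀ : 0 < p := zero_lt_one.trans_le hp
  rw [← ENNReal.le_rpow_inv_iff hp₀]
  refine ENNReal.summable.tsum_le_of_sum_le fun t => ?_
  have hwt : ∑ i ∈ t, w i ≤ 1 := (ENNReal.sum_le_tsum t).trans hw
  have hexp : 0 ≤ 1 - p⁻¹ := sub_nonneg.2 (inv_le_one_of_one_le₀ hp)
  calc ∑ i ∈ t, w i * f i
      ≤ (∑ i ∈ t, w i) ^ (1 - p⁻¹) * (∑ i ∈ t, w i * f i ^ p) ^ p⁻¹ :=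
        ENNReal.inner_le_weight_mul_Lp_of_nonneg t hp w f
    _ ≤ 1 * (∑' i, w i * f i ^ p) ^ p⁻¹ := by
        gcongr
        · exact ENNReal.rpow_le_one hwt hexp
        · exact ENNReal.sum_le_tsum t
    _ = (∑' i, w i * f i ^ p) ^ p⁻¹ := one_mul _

-- Comparing total masses replaces measurability of `Y`: the fibres have total outer measure at most
-- `μ univ`, so the bounds that subadditivity gives on `A` and `Aᶜ` must both be equalities.
theorem measure_preimage_eq_tsum_indicator {Ω : Type*} [MeasurableSpace Ω] [Countable ι]
    {μ : Measure Ω} [IsFiniteMeasure μ] {Y : Ω → ι}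
    (hY : ∑' i, μ (Y ⁻¹' {i}) ≤ μ Set.univ) (A : Set ι) :
    μ (Y ⁻¹' A) = ∑' i, A.indicator (fun i => μ (Y ⁻¹' {i})) i := by
  have hle (B : Set ι) : μ (Y ⁻¹' B) ≤ ∑' i : B, μ (Y ⁻¹' {i.1}) := by
    rw [← Set.biUnion_preimage_singleton]
    exact measure_biUnion_le μ B.to_countable _
  have hsplit : ∑' i : A, μ (Y ⁻¹' {i.1}) + ∑' i : ↥Aᶜ, μ (Y ⁻¹' {i.1})
      = ∑' i, μ (Y ⁻¹' {i}) :=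
    ENNReal.summable.tsum_add_tsum_compl (f := fun i => μ (Y ⁻¹' {i})) ENNReal.summable
  have hfin : ∑' i : ↥Aᶜ, μ (Y ⁻¹' {i.1}) ≠ ⊤ :=
    ne_top_of_le_ne_top (measure_ne_top μ Set.univ) ((hsplit ▸ le_add_self).trans hY)
  rw [← tsum_subtype A fun i => μ (Y ⁻¹' {i})]
  refine (hle A).antisymm ((ENNReal.add_le_add_iff_right hfin).1 ?_)
  calc ∑' i : A, μ (Y ⁻¹' {i.1}) + ∑' i : ↥Aᶜ, μ (Y ⁻¹' {i.1})
      ≤ μ (Y ⁻¹' A ∪ Y ⁻¹' Aᶜ) := by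
        rw [hsplit, ← Set.preimage_union, Set.union_compl_self, Set.preimage_univ]
        exact hY
    _ ≤ μ (Y ⁻¹' A) + μ (Y ⁻¹' Aᶜ) := measure_union_le _ _
    _ ≤ μ (Y ⁻¹' A) + ∑' i : ↥Aᶜ, μ (Y ⁻¹' {i.1}) := by gcongr; exact hle Aᶜ

end Preliminaries

section Paths

variable {S : Type*}

/-- The probability that a chain with transition matrix `P` started at `s` follows the path `x` in
its first `n` steps. The starting point `s` is not an entry of `x`. -/
noncomputable def pathWeight (P : S → S → ℝ≥0∞) (s : S) {n : ℕ} (x : Fin n → S) : ℝ≥0∞ :=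
  ∏ i : Fin n, P (Matrix.vecCons s x i.castSucc) (x i)

/-- The probability that the first `n` steps of a chain with transition matrix `P` started at `s`
form a path in `A`. -/
noncomputable def pathProb (P : S → S → ℝ≥0∞) (s : S) {n : ℕ} (A : Set (Fin n → S)) : ℝ≥0∞ :=
  ∑' x, A.indicator (pathWeight P s) x

/-- The number of entries of the path `x` with label at most `t`. -/
noncomputable def lowCount (ω : S → ℝ) (t : ℝ) {n : ℕ} (x : Fin n → S) : ℕ :=
  #{i | ω (x i) ≤ t}

/-- The probability that, among the first `n` steps of a chain with transition matrix `P` started at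
`s`, at most `ℓ` have a label not exceeding that of `s`. -/
noncomputable def smallProb (P : S → S → ℝ≥0∞) (ω : S → ℝ) (ℓ n : ℕ) (s : S) : ℝ≥0∞ :=
  pathProb P s {x : Fin n → S | lowCount ω (ω s) x ≤ ℓ}

/-- The part of the sequence `z` before time `j`, read backwards from time `j - 1` to time `0`. -/
def backwardPath (z : ℕ → S) (j : ℕ) : Fin j → S := fun i => z i.rev

/-- The `m` entries of the sequence `z` that follow time `j`. -/
def forwardPath (z : ℕ → S) (j m : ℕ) : Fin m → S := fun i => z (j + 1 + i)

variable {P : S → S → ℝ≥0∞}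

theorem pathWeight_snoc (s : S) {n : ℕ} (x : Fin n → S) (y : S) :
    pathWeight P s (Fin.snoc x y : Fin (n + 1) → S)
      = pathWeight P s x * P (Matrix.vecCons s x (Fin.last n)) y := by
  have hcons : Matrix.vecCons s (Fin.snoc x y : Fin (n + 1) → S)
      = Fin.snoc (Matrix.vecCons s x) y :=
    Fin.cons_snoc_eq_snoc_cons ..
  simp only [pathWeight, hcons, Fin.prod_univ_castSucc, Fin.snoc_castSucc, Fin.snoc_last]

theorem pathProb_mono (s : S) {n : ℕ} {A B : Set (Fin n → S)} (h : A ⊆ B) :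
    pathProb P s A ≤ pathProb P s B :=
  ENNReal.tsum_le_tsum fun _ => Set.indicator_le_indicator_of_subset h (fun _ => zero_le) _

theorem pathProb_init_preimage (hP : ∀ x, ∑' y, P x y = 1) (s : S) {n : ℕ}
    (A : Set (Fin n → S)) :
    pathProb P s (Fin.init ⁻¹' A : Set (Fin (n + 1) → S)) = pathProb P s A := by
  have hsnoc (x : Fin n → S) (y : S) :
      (Fin.init ⁻¹' A : Set (Fin (n + 1) → S)).indicator (pathWeight P s) (Fin.snoc x y)
        = A.indicator (pathWeight P s) x * P (Matrix.vecCons s x (Fin.last n)) y := by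
    by_cases hx : x ∈ A <;> simp [hx, pathWeight_snoc]
  unfold pathProb
  rw [← (Fin.snocEquiv fun _ : Fin (n + 1) => S).tsum_eq, ENNReal.tsum_prod', ENNReal.tsum_comm]
  refine tsum_congr fun x => (tsum_congr fun y => hsnoc x y).trans ?_
  rw [ENNReal.tsum_mul_left, hP, mul_one]

theorem pathProb_univ (hP : ∀ x, ∑' y, P x y = 1) (s : S) (n : ℕ) :
    pathProb P s (Set.univ : Set (Fin n → S)) = 1 := by
  induction n with
  | zero => simp [pathProb, pathWeight]
  | succ n ih => rw [← Set.preimage_univ (f := Fin.init), pathProb_init_preimage hP, ih]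

theorem lowCount_init_le (ω : S → ℝ) (t : ℝ) {n : ℕ} (x : Fin (n + 1) → S) :
    lowCount ω t (Fin.init x) ≤ lowCount ω t x := by
  simp only [lowCount, card_filter]
  rw [Fin.sum_univ_castSucc]
  exact Nat.le_add_right _ _

theorem antitone_smallProb (hP : ∀ x, ∑' y, P x y = 1) (ω : S → ℝ) (ℓ : ℕ) (s : S) :
    Antitone fun n => smallProb P ω ℓ n s := by
  refine antitone_nat_of_succ_le fun n => ?_
  rw [smallProb, smallProb, ← pathProb_init_preimage hP (n := n)]
  exact pathProb_mono s fun x hx => (lowCount_init_le ω (ω s) x).trans hx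

theorem forall_le_add_eq_iff {w z : ℕ → S} {j m : ℕ} :
    (∀ i ≤ j + m, w i = z i) ↔
      w j = z j ∧ backwardPath w j = backwardPath z j ∧ forwardPath w j m = forwardPath z j m := by
  constructor
  · exact fun h => ⟨h j (by lia), funext fun i => h _ (by lia), funext fun i => h _ (by lia)⟩
  · rintro ⟨hmid, hback, hforw⟩ i hi
    rcases lt_trichotomy i j with h | rfl | h
    · simpa [backwardPath, show j - (j - (i + 1) + 1) = i by lia]
        using congrFun hback (Fin.rev ⟨i, h⟩)
    · exact hmid
    · simpa [forwardPath, show j + 1 + (i - j - 1) = i by lia]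
        using congrFun hforw ⟨i - j - 1, by lia⟩

theorem exists_backwardPath_forwardPath_eq {j m : ℕ} (s : S) (x : Fin j → S) (y : Fin m → S) :
    ∃ z : ℕ → S, z j = s ∧ backwardPath z j = x ∧ forwardPath z j m = y := by
  refine ⟨fun i => if h : i < j then x (Fin.rev ⟨i, h⟩) else
    Matrix.vecCons s y (Fin.ofNat (m + 1) (i - j)), ?_, ?_, ?_⟩
  · simp
  · funext i
    exact (dif_pos i.rev.isLt).trans (congrArg x i.rev_rev)
  · funext i
    have hi : Fin.ofNat (m + 1) (j + 1 + i - j) = i.succ := by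
      ext
      simp [Nat.mod_eq_of_lt, show j + 1 + (i : ℕ) - j = i + 1 by lia]
    exact (dif_neg (by lia)).trans (by rw [hi, Matrix.cons_val_succ])

theorem pathWeight_forwardPath (z : ℕ → S) (j m : ℕ) :
    pathWeight P (z j) (forwardPath z j m)
      = ∏ i ∈ range m, P (z (j + i)) (z (j + i + 1)) := by
  have hcons (i : Fin (m + 1)) : Matrix.vecCons (z j) (forwardPath z j m) i = z (j + i) := by
    cases i using Fin.cases with
    | zero => rfl
    | succ i => simp [forwardPath, add_assoc, add_comm 1]
  rw [prod_range]
  refine Fintype.prod_congr _ _ fun i => ?_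
  rw [hcons, forwardPath, Fin.val_castSucc, add_right_comm]

theorem pathWeight_backwardPath (z : ℕ → S) (j : ℕ) :
    pathWeight P (z j) (backwardPath z j) = ∏ i ∈ range j, P (z (i + 1)) (z i) := by
  have hcons (i : Fin (j + 1)) : Matrix.vecCons (z j) (backwardPath z j) i = z i.rev := by
    cases i using Fin.cases with
    | zero => simp
    | succ i => simp [backwardPath]
  rw [prod_range, ← Equiv.prod_comp Fin.revPerm]
  refine Fintype.prod_congr _ _ fun i => ?_
  rw [hcons, Fin.rev_castSucc, Fin.val_succ, backwardPath, Fin.revPerm_apply]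

theorem mul_prod_range_eq_of_detailedBalance {π : S → ℝ≥0∞}
    (hdb : ∀ x y, π x * P x y = π y * P y x) (z : ℕ → S) (j : ℕ) :
    π (z 0) * ∏ i ∈ range j, P (z i) (z (i + 1))
      = π (z j) * ∏ i ∈ range j, P (z (i + 1)) (z i) := by
  induction j with
  | zero => simp
  | succ j ih =>
    rw [prod_range_succ, prod_range_succ, ← mul_assoc, ih, mul_right_comm, hdb, mul_right_comm,
      mul_assoc]

theorem mul_prod_range_add_eq_mul_pathWeight {π : S → ℝ≥0∞}
    (hdb : ∀ x y, π x * P x y = π y * P y x) (z : ℕ → S) (j m : ℕ) :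
    π (z 0) * ∏ i ∈ range (j + m), P (z i) (z (i + 1))
      = π (z j) * (pathWeight P (z j) (backwardPath z j)
          * pathWeight P (z j) (forwardPath z j m)) := by
  rw [prod_range_add, ← mul_assoc, mul_prod_range_eq_of_detailedBalance hdb,
    pathWeight_backwardPath, pathWeight_forwardPath, mul_assoc]

end Paths

section Chain

variable {Ω S : Type*}

theorem isSmallAt_add_iff (X : ℕ → Ω → S) (ω : S → ℝ) (j ℓ m : ℕ) (a : Ω) :
    IsSmallAt X ω j ℓ (j + m) a ↔
      lowCount ω (ω (X j a)) (backwardPath (X · a) j)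
        + lowCount ω (ω (X j a)) (forwardPath (X · a) j m) ≤ ℓ := by
  have hback : (∑ i ∈ range j, if i ≠ j ∧ ω (X i a) ≤ ω (X j a) then 1 else 0)
      = lowCount ω (ω (X j a)) (backwardPath (X · a) j) := by
    rw [lowCount, card_filter, sum_range, ← Equiv.sum_comp Fin.revPerm]
    exact Fintype.sum_congr _ _ fun i => if_congr (and_iff_right i.rev.isLt.ne) rfl rfl
  have hforw : (∑ i ∈ range m, if j + (i + 1) ≠ j ∧ ω (X (j + (i + 1)) a) ≤ ω (X j a)
      then 1 else 0) = lowCount ω (ω (X j a)) (forwardPath (X · a) j m) := by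
    rw [lowCount, card_filter, sum_range]
    simp [forwardPath, add_assoc, add_comm 1]
  rw [IsSmallAt, card_filter, add_assoc, sum_range_add, sum_range_succ', hback, hforw]
  simp

theorem isSmallAt_zero_iff (X : ℕ → Ω → S) (ω : S → ℝ) (ℓ k : ℕ) (a : Ω) :
    IsSmallAt X ω 0 ℓ k a ↔ lowCount ω (ω (X 0 a)) (forwardPath (X · a) 0 k) ≤ ℓ := by
  have hback : lowCount ω (ω (X 0 a)) (backwardPath (X · a) 0) = 0 := by simp [lowCount]
  simpa only [hback, zero_add] using isSmallAt_add_iff X ω 0 ℓ k a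

variable [MeasurableSpace Ω] {μ : Measure Ω} {X : ℕ → Ω → S} {π : S → ℝ≥0∞} {P : S → S → ℝ≥0∞}

/-- The process `X` is a Markov chain with initial distribution `π` and transition matrix `P`,
in the sense that its cylinder events have the corresponding (outer) measures. The `X i` are not
required to be measurable. -/
def IsMarkovChain_s7 (μ : Measure Ω) (X : ℕ → Ω → S) (π : S → ℝ≥0∞) (P : S → S → ℝ≥0∞) : Prop :=
  ∀ (n : ℕ) (x : ℕ → S),
    μ {a | ∀ i ≤ n, X i a = x i} = π (x 0) * ∏ i ∈ range n, P (x i) (x (i + 1))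

namespace IsMarkovChain_s7

theorem detailedBalance (hX : IsMarkovChain_s7 μ X π P)
    (hrev : ∀ x : ℕ → S, μ {a | ∀ i ≤ 1, X i a = x i} = μ {a | ∀ i ≤ 1, X i a = x (1 - i)})
    (x y : S) : π x * P x y = π y * P y x := by
  let z : ℕ → S := fun i => if i = 0 then x else y
  simpa [z] using (hX 1 z).symm.trans ((hrev z).trans (hX 1 fun i => z (1 - i)))

theorem measure_past_future_eq (hX : IsMarkovChain_s7 μ X π P)
    (hdb : ∀ x y, π x * P x y = π y * P y x) {j m : ℕ} (s : S) (x : Fin j → S) (y : Fin m → S) :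
    μ {a | X j a = s ∧ backwardPath (X · a) j = x ∧ forwardPath (X · a) j m = y}
      = π s * (pathWeight P s x * pathWeight P s y) := by
  obtain ⟨z, rfl, rfl, rfl⟩ := exists_backwardPath_forwardPath_eq s x y
  rw [← mul_prod_range_add_eq_mul_pathWeight hdb, ← hX]
  simp only [forall_le_add_eq_iff]

theorem measure_past_future_mem [Countable S] [IsProbabilityMeasure μ]
    (hX : IsMarkovChain_s7 μ X π P) (hπ : ∑' x, π x = 1) (hP : ∀ x, ∑' y, P x y = 1)
    (hdb : ∀ x y, π x * P x y = π y * P y x) {j m : ℕ}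
    (A : S → Set (Fin j → S)) (B : S → Set (Fin m → S)) :
    μ {a | backwardPath (X · a) j ∈ A (X j a) ∧ forwardPath (X · a) j m ∈ B (X j a)}
      = ∑' s, π s * (pathProb P s (A s) * pathProb P s (B s)) := by
  let Y (a : Ω) : S × (Fin j → S) × (Fin m → S) :=
    (X j a, backwardPath (X · a) j, forwardPath (X · a) j m)
  let E (A : S → Set (Fin j → S)) (B : S → Set (Fin m → S)) :
      Set (S × (Fin j → S) × (Fin m → S)) := {p | p.2.1 ∈ A p.1 ∧ p.2.2 ∈ B p.1}
  have hfibre (p) : μ (Y ⁻¹' {p}) = π p.1 * (pathWeight P p.1 p.2.1 * pathWeight P p.1 p.2.2) := by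
    rw [← hX.measure_past_future_eq hdb]
    congr 1 with a
    simp [Y, Prod.ext_iff]
  have hsum (A : S → Set (Fin j → S)) (B : S → Set (Fin m → S)) :
      ∑' p, (E A B).indicator (fun p => μ (Y ⁻¹' {p})) p
        = ∑' s, π s * (pathProb P s (A s) * pathProb P s (B s)) := by
    rw [ENNReal.tsum_prod']
    refine tsum_congr fun s => ?_
    rw [ENNReal.tsum_prod', pathProb, ← ENNReal.tsum_mul_right, ← ENNReal.tsum_mul_left]
    refine tsum_congr fun x => ?_
    rw [pathProb, ← ENNReal.tsum_mul_left, ← ENNReal.tsum_mul_left]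
    refine tsum_congr fun y => ?_
    by_cases hx : x ∈ A s <;> by_cases hy : y ∈ B s <;> simp [E, hx, hy, hfibre]
  have htotal : ∑' p, μ (Y ⁻¹' {p}) ≤ μ Set.univ := by
    simpa [E, pathProb_univ hP, hπ] using
      (hsum (fun _ => Set.univ) (fun _ => Set.univ)).le
  exact (measure_preimage_eq_tsum_indicator htotal (E A B)).trans (hsum A B)

theorem measure_isSmallAt_zero [Countable S] [IsProbabilityMeasure μ]
    (hX : IsMarkovChain_s7 μ X π P) (hπ : ∑' x, π x = 1) (hP : ∀ x, ∑' y, P x y = 1)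
    (hdb : ∀ x y, π x * P x y = π y * P y x) (ω : S → ℝ) (ℓ k : ℕ) :
    μ {a | IsSmallAt X ω 0 ℓ k a} = ∑' s, π s * smallProb P ω ℓ k s := by
  simpa [pathProb_univ hP, isSmallAt_zero_iff, smallProb] using
    hX.measure_past_future_mem hπ hP hdb (j := 0) (fun _ => Set.univ)
      (fun s => {x : Fin k → S | lowCount ω (ω s) x ≤ ℓ})

theorem tsum_smallProb_mul_smallProb_le_measure_isSmallAt [Countable S] [IsProbabilityMeasure μ]
    (hX : IsMarkovChain_s7 μ X π P) (hπ : ∑' x, π x = 1) (hP : ∀ x, ∑' y, P x y = 1)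
    (hdb : ∀ x y, π x * P x y = π y * P y x) (ω : S → ℝ) (j ℓ₁ ℓ₂ m : ℕ) :
    ∑' s, π s * (smallProb P ω ℓ₁ j s * smallProb P ω ℓ₂ m s)
      ≤ μ {a | IsSmallAt X ω j (ℓ₁ + ℓ₂) (j + m) a} := by
  simp only [smallProb]
  rw [← hX.measure_past_future_mem hπ hP hdb]
  refine measure_mono fun a ⟨hback, hforw⟩ => ?_
  exact (isSmallAt_add_iff X ω j (ℓ₁ + ℓ₂) m a).2 (add_le_add hback hforw)

end IsMarkovChain_s7

end Chain

/-- Let `X 0, X 1, ...` be a stationary reversible Markov chain on a countable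
state space `S` with reversible stationary distribution `π`, `X 0 ~ π`, and label function
`ω : S → ℝ`.  (Reversibility: for every `k`, the joint distribution of `(X 0, ..., X k)`
equals that of `(X k, ..., X 0)`.)  For `j ≤ k`, let `ρ_{j,ℓ}^k` be the (unconditional)
probability that `X j` is `ℓ`-small among `X 0, ..., X k`.  Then for every `j ≤ k` and every
`ℓ`, `ρ_{j,2ℓ}^k ≥ (ρ_{0,ℓ}^k)²`. -/
theorem prob_small_ge_sq
    {Ω S : Type*} [MeasurableSpace Ω] [Countable S]
    (μ : Measure Ω) [IsProbabilityMeasure μ]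
    (X : ℕ → Ω → S) (π : S → ℝ≥0∞) (P : S → S → ℝ≥0∞) (ω : S → ℝ)
    (hπ : ∑' x, π x = 1)
    (hProw : ∀ x, ∑' y, P x y = 1)
    -- the chain is the Markov chain with initial distribution `π` and transition matrix `P`
    (hjoint : ∀ (n : ℕ) (x : ℕ → S),
      μ {a | ∀ i ≤ n, X i a = x i} = π (x 0) * ∏ i ∈ Finset.range n, P (x i) (x (i + 1)))
    -- `π` is stationary
    (hstat : ∀ y, ∑' x, π x * P x y = π y)
    -- reversibility: `(X 0, ..., X k)` and `(X k, ..., X 0)` have the same joint distribution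
    (hrev : ∀ (n : ℕ) (x : ℕ → S),
      μ {a | ∀ i ≤ n, X i a = x i} = μ {a | ∀ i ≤ n, X i a = x (n - i)})
    (j ℓ k : ℕ) (hjk : j ≤ k) :
    (μ {a | IsSmallAt X ω 0 ℓ k a}) ^ 2 ≤ μ {a | IsSmallAt X ω j (2 * ℓ) k a} := by
  have hX : IsMarkovChain_s7 μ X π P := hjoint
  have hdb := hX.detailedBalance (hrev 1)
  obtain ⟨m, rfl⟩ := Nat.exists_eq_add_of_le hjk
  let f (n : ℕ) (s : S) : ℝ≥0∞ := smallProb P ω ℓ n s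
  have hf (s : S) : Antitone fun n => f n s := antitone_smallProb hProw ω ℓ s
  calc μ {a | IsSmallAt X ω 0 ℓ (j + m) a} ^ 2
      = (∑' s, π s * f (j + m) s) ^ 2 := by rw [hX.measure_isSmallAt_zero hπ hProw hdb]
    _ ≤ ∑' s, π s * f (j + m) s ^ 2 :=
        mod_cast rpow_tsum_mul_le_tsum_mul_rpow one_le_two hπ.le (f (j + m))
    _ ≤ ∑' s, π s * (f j s * f m s) := by
        simp only [sq]
        gcongr with s
        · exact hf s (Nat.le_add_right j m)
        · exact hf s (Nat.le_add_left m j)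
    _ ≤ μ {a | IsSmallAt X ω j (2 * ℓ) (j + m) a} := by
        rw [two_mul]
        exact hX.tsum_smallProb_mul_smallProb_le_measure_isSmallAt hπ hProw hdb ω j ℓ ℓ m
end
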